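/- Let p be an odd prime, m ≥ 1, α with v_p(α - 1) = m, and H = ⟨A,B | A^{[A,B]} = A^α, B^{[B,A]} = B^α, A^{p^{2m}} = B^{p^{2m}} = 1⟩ of order p^{6m}. For every pair (x,y) ∈ Z_2(H) × Z_2(H), the assignment A ↦ Ax, B ↦ By extends to an automorphism of H fixing Z_2(H) pointwise, and the resulting map Z_2(H)² → Aut(H) is an injective homomorphism whose image is Aut_2(H), so |Aut_2(H)| = p^{6m}. -/

import Mathlib

/-- Relators of the group `H(α)`:
`A^{[A,B]} = A^α`, `B^{[B,A]} = B^α`, `A^{p^{2m}} = 1`, `B^{p^{2m}} = 1`,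
with the convention `[A,B] = A⁻¹B⁻¹AB` and `x^y = y⁻¹xy`. -/
def hRels (p m : ℕ) (α : ℤ) : Set (FreeGroup (Fin 2)) :=
  let A : FreeGroup (Fin 2) := FreeGroup.of 0
  let B : FreeGroup (Fin 2) := FreeGroup.of 1
  let C : FreeGroup (Fin 2) := A⁻¹ * B⁻¹ * A * B
  {(C⁻¹ * A * C) * (A ^ α)⁻¹, (C * B * C⁻¹) * (B ^ α)⁻¹,
    A ^ (p ^ (2 * m)), B ^ (p ^ (2 * m))}

/-- The group `H(α)` of order `p^{6m}`. -/
abbrev HGroup (p m : ℕ) (α : ℤ) := PresentedGroup (hRels p m α)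

/-- `v_p(α - 1) = m`. -/
def vCond (p m : ℕ) (α : ℤ) : Prop :=
  (p : ℤ) ^ m ∣ α - 1 ∧ ¬ (p : ℤ) ^ (m + 1) ∣ α - 1

/-- The extra condition required when `p = 3` and `m = 1`. -/
def specialCond (p m : ℕ) (α : ℤ) : Prop :=
  p = 3 ∧ m = 1 → (α - 1) / 3 ≡ 1 [ZMOD 3]


/-- `autC T i` is `Aut_i(T)`: automorphisms `g` with `g t * t⁻¹ ∈ Z_i(T)` for all `t`. -/
def autC (T : Type*) [Group T] (i : ℕ) : Subgroup (MulAut T) where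
  carrier := {g | ∀ t : T, g t * t⁻¹ ∈ upperCentralSeries T i}
  one_mem' := by intro t; simpa using (upperCentralSeries T i).one_mem
  mul_mem' := by
    intro g h hg hh t
    have h1 := hg (h t)
    have h2 := hh t
    have : (g * h) t * t⁻¹ = (g (h t) * (h t)⁻¹) * (h t * t⁻¹) := by
      simp [MulAut.mul_apply, mul_assoc]
    rw [this]
    exact mul_mem h1 h2
  inv_mem' := by
    intro g hg t
    have h1 := hg (g⁻¹ t)
    have h2 : g (g⁻¹ t) = t := by simp
    rw [h2] at h1
    have h3 := (upperCentralSeries T i).inv_mem h1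
    simpa using h3

/-- The basic relations. -/
structure HB {G : Type*} [Group G] (q : ℕ) (α : ℤ) (A B C : G) : Prop where
  hC : C = A⁻¹ * B⁻¹ * A * B
  hA : C⁻¹ * A * C = A ^ α
  hB : C * B * C⁻¹ = B ^ α
  hAq : A ^ (q * q) = 1
  hBq : B ^ (q * q) = 1
  odd : Odd q
  dvd : (q : ℤ) ∣ α - 1

theorem zpow_eq_of_dvd_aux {G : Type*} [Group G] {g : G} {n : ℕ} (h : g ^ n = 1) {a b : ℤ}
    (hd : (n : ℤ) ∣ a - b) : g ^ a = g ^ b := by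
  obtain ⟨c, hc⟩ := hd
  have : a = b + n * c := by linarith
  rw [this, zpow_add, zpow_mul, zpow_natCast, h, one_zpow, mul_one]

theorem dvd_choose_two_aux {q : ℕ} (h : Odd q) : q ∣ q.choose 2 := by
  obtain ⟨k, rfl⟩ := h
  rw [Nat.choose_two_right]
  refine ⟨k, ?_⟩
  have : (2 * k + 1) * (2 * k + 1 - 1) = 2 * ((2 * k + 1) * k) := by
    simp; ring
  rw [this]; simp

namespace HB
variable {G : Type*} [Group G] {q : ℕ} {α : ℤ} {A B C : G}

theorem symm (h : HB q α A B C) : HB q α B A C⁻¹ where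
  hC := by rw [h.hC]; group
  hA := by simpa using h.hB
  hB := by simpa using h.hA
  hAq := h.hBq
  hBq := h.hAq
  odd := h.odd
  dvd := h.dvd

theorem sq_dvd (h : HB q α A B C) : ((q * q : ℕ) : ℤ) ∣ (α - 1) * (α - 1) := by
  push_cast; exact mul_dvd_mul h.dvd h.dvd

theorem conjB (h : HB q α A B C) : C⁻¹ * B * C = B ^ (2 - α) := by
  have h1 : (C * B * C⁻¹) ^ (2 - α) = B := by
    rw [h.hB, ← zpow_mul]
    conv_rhs => rw [← zpow_one B]
    apply zpow_eq_of_dvd_aux h.hBq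
    have e : α * (2 - α) - 1 = -((α - 1) * (α - 1)) := by ring
    rw [e, dvd_neg]
    exact h.sq_dvd
  rw [conj_zpow] at h1
  nth_rewrite 1 [← h1]
  group

theorem conjA_pow (h : HB q α A B C) (k : ℕ) :
    C⁻¹ ^ k * A * C ^ k = A ^ (1 + k * (α - 1)) := by
  induction k with
  | zero => simp
  | succ k ih =>
    have : C⁻¹ ^ (k+1) * A * C ^ (k+1) = C⁻¹ * (C⁻¹ ^ k * A * C ^ k) * C⁻¹⁻¹ := by
      rw [pow_succ' C⁻¹, pow_succ C]; group
    rw [this, ih, ← conj_zpow, inv_inv, h.hA, ← zpow_mul]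
    apply zpow_eq_of_dvd_aux h.hAq
    have e : α * (1 + (k : ℤ) * (α - 1)) - (1 + ((k + 1 : ℕ) : ℤ) * (α - 1)) =
        k * ((α - 1) * (α - 1)) := by push_cast; ring
    rw [e]
    exact h.sq_dvd.mul_left (k : ℤ)

theorem pow_form (h : HB q α A B C) (n : ℕ) :
    (B * C⁻¹) ^ n = B ^ ((n : ℤ) + (1 - α) * (n.choose 2 : ℤ)) * C⁻¹ ^ n := by
  induction n with
  | zero => simp
  | succ n ih =>
    rw [pow_succ', ih]
    have e : ∀ z : ℤ, B * C⁻¹ * (B ^ z * C⁻¹ ^ n) = B ^ (1 + (2 - α) * z) * C⁻¹ ^ (n+1) := by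
      intro z
      rw [zpow_add, zpow_mul, ← h.conjB, zpow_one]
      have : (C⁻¹ * B * C) ^ z = C⁻¹ * B ^ z * C := by
        have := @conj_zpow _ _ z C⁻¹ B
        simpa using this
      rw [this, pow_succ']; group
    rw [e]
    congr 1
    apply zpow_eq_of_dvd_aux h.hBq
    rw [Nat.choose_succ_succ' n 1, Nat.choose_one_right]
    have e : 1 + (2 - α) * ((n : ℤ) + (1 - α) * (n.choose 2 : ℤ)) -
        (((n + 1 : ℕ) : ℤ) + (1 - α) * ((n + n.choose (1 + 1) : ℕ) : ℤ)) =
        (n.choose 2 : ℤ) * ((α - 1) * (α - 1)) := by push_cast; ring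
    rw [e]
    exact h.sq_dvd.mul_left _

theorem conj_pow' (h : HB q α A B C) (n : ℕ) :
    A⁻¹ * B ^ n * A = B ^ ((n : ℤ) + (1 - α) * (n.choose 2 : ℤ)) * C⁻¹ ^ n := by
  rw [← h.pow_form]
  have : B * C⁻¹ = A⁻¹ * B * A⁻¹⁻¹ := by rw [h.hC]; group
  rw [this, conj_pow, inv_inv]

theorem one_sub_choose (h : HB q α A B C) : ((q * q : ℕ) : ℤ) ∣ (1 - α) * (q.choose 2 : ℤ) := by
  push_cast
  apply mul_dvd_mul
  · rw [← dvd_neg]; simpa using h.dvd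
  · exact_mod_cast dvd_choose_two_aux h.odd

theorem conjBq (h : HB q α A B C) : A⁻¹ * B ^ q * A = B ^ q * C⁻¹ ^ q := by
  rw [h.conj_pow']
  congr 1
  rw [← zpow_natCast B q]
  apply zpow_eq_of_dvd_aux h.hBq
  simpa using h.one_sub_choose

theorem conjAq (h : HB q α A B C) : B⁻¹ * A ^ q * B = A ^ q * C ^ q := by
  simpa using h.symm.conjBq

theorem commAC (h : HB q α A B C) : Commute (C ^ q) A := by
  have := h.conjA_pow q
  have h2 : A ^ (1 + (q : ℤ) * (α - 1)) = A := by
    conv_rhs => rw [← zpow_one A]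
    apply zpow_eq_of_dvd_aux h.hAq
    push_cast
    simpa using mul_dvd_mul_left (q : ℤ) h.dvd
  rw [h2] at this
  have h3 : A * C ^ q = C ^ q * A := by
    rw [inv_pow] at this
    nth_rewrite 2 [← this]
    group
  exact h3.symm

theorem commBC (h : HB q α A B C) : Commute (C ^ q) B := by
  have := h.symm.commAC
  rw [inv_pow] at this
  exact (Commute.inv_left_iff).1 this

theorem conjAqz (h : HB q α A B C) (n : ℤ) :
    B⁻¹ * A ^ (q * n) * B = A ^ (q * n) * C ^ (q * n) := by
  have := @conj_zpow _ _ n B⁻¹ (A ^ q)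
  rw [inv_inv, h.conjAq, ((h.commAC.symm).pow_left q).mul_zpow] at this
  simp only [zpow_mul, zpow_natCast]
  exact this.symm

theorem hCq (h : HB q α A B C) : C ^ (q * q) = 1 := by
  have := h.conjAqz q
  have e : ((q : ℤ) * q) = ((q * q : ℕ) : ℤ) := by push_cast; rfl
  rw [e, zpow_natCast, zpow_natCast, h.hAq] at this
  simpa using this.symm

theorem conjBqz (h : HB q α A B C) (n : ℤ) :
    A⁻¹ * B ^ (q * n) * A = B ^ (q * n) * C⁻¹ ^ (q * n) := h.symm.conjAqz n

theorem commABq (h : HB q α A B C) : Commute (A ^ q) (B ^ q) := by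
  have key : ∀ n : ℕ, (B⁻¹) ^ n * A ^ q * B ^ n = A ^ q * C ^ (q * n) := by
    intro n
    induction n with
    | zero => simp
    | succ n ih =>
      have : B⁻¹ ^ (n+1) * A ^ q * B ^ (n+1) = B⁻¹ * (B⁻¹ ^ n * A ^ q * B ^ n) * B := by
        rw [pow_succ' B⁻¹, pow_succ B]; group
      rw [this, ih]
      have e : B⁻¹ * (A ^ q * C ^ (q * n)) * B = (B⁻¹ * A ^ q * B) * (B⁻¹ * C ^ (q * n) * B) := by
        group
      have e2 : B⁻¹ * C ^ (q * n) * B = C ^ (q * n) := by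
        have : Commute (C ^ (q * n)) B := by rw [pow_mul]; exact h.commBC.pow_left n
        rw [mul_assoc, this.eq]; group
      rw [e, e2, h.conjAq, mul_assoc, ← pow_add]
      congr 2; ring
  have := key q
  rw [h.hCq, mul_one, inv_pow] at this
  show A ^ q * B ^ q = B ^ q * A ^ q
  nth_rewrite 2 [← this]
  group

end HB

/-- The relations, together with generation and uniqueness of normal forms. -/
structure HD {G : Type*} [Group G] (q : ℕ) (α : ℤ) (A B C : G) : Prop extends HB q α A B C where
  qpos : 0 < q
  hdiv : ∀ n : ℤ, ((q * q : ℕ) : ℤ) ∣ (α - 1) * n → (q : ℤ) ∣ n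
  gen : Subgroup.closure {A, B} = ⊤
  uniq : ∀ i j k i' j' k' : ℤ, B ^ j * C ^ k * A ^ i = B ^ j' * C ^ k' * A ^ i' →
    ((q * q : ℕ) : ℤ) ∣ i - i' ∧ ((q * q : ℕ) : ℤ) ∣ j - j' ∧ ((q * q : ℕ) : ℤ) ∣ k - k'

namespace HD
variable {G : Type*} [Group G] {q : ℕ} {α : ℤ} {A B C : G}

theorem mem_center (h : HD q α A B C) {z : G} (h1 : Commute z A) (h2 : Commute z B) :
    z ∈ Subgroup.center G := by
  rw [Subgroup.mem_center_iff]
  have : ∀ g ∈ Subgroup.closure {A, B}, g * z = z * g := by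
    intro g hg
    induction hg using Subgroup.closure_induction with
    | mem x hx =>
      rcases hx with rfl | rfl
      · exact h1.symm
      · exact h2.symm
    | one => simp
    | mul x y _ _ hx hy => exact (Commute.mul_left (hx : Commute x z) hy)
    | inv x _ hx => exact Commute.inv_left hx
  intro g
  exact this g (by rw [h.gen]; trivial)

theorem mem_two_iff {x : G} : x ∈ upperCentralSeries G 2 ↔
    ∀ y, x * y * x⁻¹ * y⁻¹ ∈ Subgroup.center G := by
  rw [← upperCentralSeries_one G]
  exact Subgroup.mem_upperCentralSeries_succ_iff

theorem mem_two (h : HD q α A B C) {x : G} (h1 : A⁻¹ * x * A * x⁻¹ ∈ Subgroup.center G)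
    (h2 : B⁻¹ * x * B * x⁻¹ ∈ Subgroup.center G) : x ∈ upperCentralSeries G 2 := by
  rw [mem_two_iff]
  have key : ∀ g ∈ Subgroup.closure {A, B}, x * g * x⁻¹ * g⁻¹ ∈ Subgroup.center G := by
    have red : ∀ g : G, x * g * x⁻¹ * g⁻¹ ∈ Subgroup.center G ↔
        Commute (QuotientGroup.mk (s := Subgroup.center G) x) (QuotientGroup.mk g) := by
      intro g
      rw [← QuotientGroup.eq_one_iff]
      simp only [QuotientGroup.mk_mul, QuotientGroup.mk_inv]
      rw [mul_inv_eq_one, mul_inv_eq_iff_eq_mul]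
      rfl
    have red2 : ∀ g : G, g⁻¹ * x * g * x⁻¹ ∈ Subgroup.center G →
        Commute (QuotientGroup.mk (s := Subgroup.center G) x) (QuotientGroup.mk g) := by
      intro g hg
      rw [← QuotientGroup.eq_one_iff] at hg
      simp only [QuotientGroup.mk_mul, QuotientGroup.mk_inv] at hg
      rw [mul_inv_eq_one, mul_assoc, inv_mul_eq_iff_eq_mul] at hg
      exact hg
    intro g hg
    rw [red]
    induction hg using Subgroup.closure_induction with
    | mem y hy =>
      rcases hy with rfl | rfl
      · exact red2 _ h1
      · exact red2 _ h2
    | one => simp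
    | mul a b _ _ ha hb => exact ha.mul_right hb
    | inv a _ ha => exact ha.inv_right
  intro y
  exact key y (by rw [h.gen]; trivial)

theorem Cq_center (h : HD q α A B C) : C ^ q ∈ Subgroup.center G :=
  h.mem_center h.commAC h.commBC

theorem center_le (x : G) (hx : x ∈ Subgroup.center G) : x ∈ upperCentralSeries G 2 := by
  rw [← upperCentralSeries_one G] at hx
  exact upperCentralSeries_mono G (by norm_num : 1 ≤ 2) hx

theorem Aq_mem (h : HD q α A B C) : A ^ q ∈ upperCentralSeries G 2 := by
  apply h.mem_two
  · have : A⁻¹ * A ^ q * A * (A ^ q)⁻¹ = 1 := by group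
    rw [this]; exact one_mem _
  · rw [h.conjAq]
    have : A ^ q * C ^ q * (A ^ q)⁻¹ = C ^ q := by
      rw [((h.commAC.symm).pow_left q).eq]; group
    rw [this]; exact h.Cq_center

theorem Bq_mem (h : HD q α A B C) : B ^ q ∈ upperCentralSeries G 2 := by
  apply h.mem_two
  · rw [h.conjBq]
    have : B ^ q * C⁻¹ ^ q * (B ^ q)⁻¹ = (C ^ q)⁻¹ := by
      rw [inv_pow, ((h.commBC.symm).pow_left q).inv_right.eq]; group
    rw [this]; exact inv_mem h.Cq_center
  · have : B⁻¹ * B ^ q * B * (B ^ q)⁻¹ = 1 := by group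
    rw [this]; exact one_mem _

/-- Commuting a second-center element past anything costs a central element. -/
theorem two_comm {x : G} (hx : x ∈ upperCentralSeries G 2) (g : G) :
    ∃ z ∈ Subgroup.center G, x * g = g * x * z := by
  refine ⟨x * g * x⁻¹ * g⁻¹, mem_two_iff.1 hx g, ?_⟩
  have := (Subgroup.mem_center_iff.1 (mem_two_iff.1 hx g)) (g * x)
  rw [this]; group

theorem comm_C (h : HD q α A B C) {x : G} (hx : x ∈ upperCentralSeries G 2) : Commute x C := by
  have c1 := mem_two_iff.1 hx A
  have c2 := mem_two_iff.1 hx B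
  rw [Subgroup.mem_center_iff] at c1 c2
  generalize hz : x * A * x⁻¹ * A⁻¹ = z at c1
  generalize hw : x * B * x⁻¹ * B⁻¹ = w at c2
  have ea : x * A * x⁻¹ = z * A := by rw [← hz]; group
  have eb : x * B * x⁻¹ = w * B := by rw [← hw]; group
  have : x * C * x⁻¹ = C := by
    have : x * C * x⁻¹ = (x * A * x⁻¹)⁻¹ * (x * B * x⁻¹)⁻¹ * (x * A * x⁻¹) * (x * B * x⁻¹) := by
      rw [h.hC]; group
    rw [this, ea, eb]
    have e1 : (w * B)⁻¹ * (z * A) = z * ((w * B)⁻¹ * A) := by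
      rw [← mul_assoc, c1, mul_assoc]
    have e2 : A * (w * B) = w * (A * B) := by rw [← mul_assoc, c2, mul_assoc]
    rw [mul_assoc (z * A)⁻¹, e1]
    have : (z * A)⁻¹ * (z * ((w * B)⁻¹ * A)) * (w * B) = A⁻¹ * (w * B)⁻¹ * (A * (w * B)) := by
      group
    rw [this, e2, h.hC]; group
  show x * C = C * x
  nth_rewrite 2 [← this]; group

theorem exists_nat {g : G} {n : ℕ} (hn : 0 < n) (hg : g ^ n = 1) (z : ℤ) :
    ∃ k : ℕ, g ^ z = g ^ k := by
  have hn' : (0 : ℤ) < n := by exact_mod_cast hn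
  obtain ⟨k, hk⟩ := Int.eq_ofNat_of_zero_le (Int.emod_nonneg z hn'.ne')
  refine ⟨k, ?_⟩
  rw [← zpow_natCast]
  apply zpow_eq_of_dvd_aux hg
  have e : (k : ℤ) = z % n := by rw [hk]
  rw [e]
  exact Int.dvd_self_sub_emod

/-- Normal form. -/
theorem normal (h : HD q α A B C) (x : G) :
    ∃ (j k : ℕ) (i : ℤ), x = B ^ j * C ^ k * A ^ i := by
  have qq : 0 < q * q := Nat.mul_pos h.qpos h.qpos
  let S : Set G := {x | ∃ (j k : ℕ) (i : ℤ), x = B ^ j * C ^ k * A ^ i}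
  have hBz : ∀ (z : ℤ), ∀ x ∈ S, B ^ z * x ∈ S := by
    rintro z _ ⟨j, k, i, rfl⟩
    obtain ⟨n, hn⟩ := exists_nat qq h.hBq z
    refine ⟨n + j, k, i, ?_⟩
    rw [hn, pow_add]; group
  have hCz : ∀ (z w : ℤ) (k : ℕ) (i : ℤ), B ^ z * C ^ w * C ^ k * A ^ i ∈ S := by
    intro z w k i
    obtain ⟨n, hn⟩ := exists_nat qq h.hBq z
    obtain ⟨n', hn'⟩ := exists_nat qq h.hCq w
    refine ⟨n, n' + k, i, ?_⟩
    rw [hn, hn', pow_add]; group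
  have hA1 : ∀ x ∈ S, A⁻¹ * x ∈ S := by
    rintro _ ⟨j, k, i, rfl⟩
    have e : A⁻¹ * (B ^ j * C ^ k * A ^ i) =
        (A⁻¹ * B ^ j * A) * C ^ k * (C⁻¹ ^ k * A * C ^ k)⁻¹ * A ^ i := by
      rw [inv_pow]; group
    rw [e, h.conj_pow', h.conjA_pow, ← zpow_neg]
    have e2 := hCz ((j : ℤ) + (1 - α) * (j.choose 2 : ℤ)) (-j) k (-(1 + k * (α - 1)) + i)
    rw [zpow_add A, ← mul_assoc] at e2
    convert e2 using 5
    rw [zpow_neg, zpow_natCast, inv_pow]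
  have hAn : ∀ n : ℕ, ∀ x ∈ S, A⁻¹ ^ n * x ∈ S := by
    intro n
    induction n with
    | zero => intro x hx; simpa using hx
    | succ n ih =>
      intro x hx
      rw [pow_succ', mul_assoc]
      exact hA1 _ (ih x hx)
  have hAz : ∀ x ∈ S, A * x ∈ S := by
    intro x hx
    obtain ⟨n, hn⟩ := exists_nat (g := A⁻¹) qq (by rw [inv_pow, h.hAq, inv_one]) (-1)
    have := hAn n x hx
    rw [← hn] at this
    simpa using this
  have key : ∀ g ∈ Subgroup.closure {A, B}, g ∈ S := by
    intro g hg
    induction hg using Subgroup.closure_induction_left with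
    | one => exact ⟨0, 0, 0, by simp⟩
    | mul_left x hx y _ hy =>
      rcases hx with rfl | rfl
      · exact hAz _ hy
      · simpa using hBz 1 _ hy
    | inv_mul_cancel x hx y _ hy =>
      rcases hx with rfl | rfl
      · exact hA1 _ hy
      · simpa using hBz (-1) _ hy
  exact key x (by rw [h.gen]; trivial)

theorem comm_Cq (h : HD q α A B C) (x : G) : Commute (C ^ q) x :=
  ((Subgroup.mem_center_iff.1 h.Cq_center) x).symm

theorem two_form (h : HD q α A B C) {x : G} (hx : x ∈ upperCentralSeries G 2) :
    ∃ j k i : ℤ, x = (B ^ q) ^ j * (C ^ q) ^ k * (A ^ q) ^ i := by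
  obtain ⟨j, k, i, rfl⟩ := h.normal x
  have hc := h.comm_C hx
  have e1 : B ^ (α * j) * C ^ (k + 1 : ℤ) * A ^ i = B ^ (j : ℤ) * C ^ (k + 1 : ℤ) * A ^ (α * i) := by
    have ea : A ^ (α * i) = C⁻¹ * A ^ i * C := by
      rw [zpow_mul, ← h.hA]
      simpa using @conj_zpow _ _ i C⁻¹ A
    have eb : B ^ (α * j) = C * B ^ (j : ℤ) * C⁻¹ := by
      rw [zpow_mul, ← h.hB]
      simp
    rw [ea, eb]
    have := hc.eq
    rw [zpow_add_one, zpow_natCast, zpow_natCast]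
    have l : C * B ^ j * C⁻¹ * (C ^ k * C) * A ^ i = C * (B ^ j * C ^ k * A ^ i) := by
      rw [← pow_succ, pow_succ']; group
    have r : B ^ j * (C ^ k * C) * (C⁻¹ * A ^ i * C) = (B ^ j * C ^ k * A ^ i) * C := by
      group
    rw [l, r, this]
  have u := h.uniq _ _ _ _ _ _ e1
  have hj : (q : ℤ) ∣ j := by
    apply h.hdiv
    have := u.2.1
    rwa [show α * (j : ℤ) - j = (α - 1) * j by ring] at this
  have hi : (q : ℤ) ∣ i := by
    apply h.hdiv
    have := u.1
    rw [show i - α * i = -((α - 1) * i) by ring, dvd_neg] at this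
    exact this
  obtain ⟨j', hj'⟩ := hj
  obtain ⟨i', rfl⟩ := hi
  have hBm : B ^ j ∈ upperCentralSeries G 2 := by
    rw [← zpow_natCast, hj', zpow_mul, zpow_natCast]
    exact zpow_mem h.Bq_mem _
  have hAm : A ^ ((q : ℤ) * i') ∈ upperCentralSeries G 2 := by
    rw [zpow_mul, zpow_natCast]
    exact zpow_mem h.Aq_mem _
  have hCm : C ^ k ∈ upperCentralSeries G 2 := by
    have := mul_mem (mul_mem (inv_mem hBm) hx) (inv_mem hAm)
    convert this using 1
    group
  have hk : (q : ℤ) ∣ k := by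
    have c := mem_two_iff.1 (inv_mem hCm) A
    have e : (C ^ k)⁻¹ * A * (C ^ k)⁻¹⁻¹ * A⁻¹ = A ^ ((k : ℤ) * (α - 1)) := by
      rw [inv_inv, ← inv_pow, h.conjA_pow, zpow_add]
      simp
      rw [← zpow_one_add, ← zpow_sub_one]
      congr 1; ring
    rw [e] at c
    obtain ⟨u, hu⟩ := h.dvd
    have e3 := h.conjAqz (u * k)
    have e4 : (k : ℤ) * (α - 1) = q * (u * k) := by rw [hu]; ring
    rw [← e4] at e3
    have c2 := (Subgroup.mem_center_iff.1 c) B⁻¹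
    rw [c2] at e3
    have e5 : C ^ ((k : ℤ) * (α - 1)) = 1 := by simpa using e3.symm
    have := h.uniq 0 0 (k * (α - 1)) 0 0 0 (by rw [e5]; simp)
    apply h.hdiv
    have t := this.2.2
    rwa [sub_zero, mul_comm (k : ℤ)] at t
  obtain ⟨k', hk'⟩ := hk
  refine ⟨j', k', i', ?_⟩
  rw [← zpow_natCast B j, ← zpow_natCast C k, hj', hk', zpow_mul, zpow_mul, zpow_mul]
  simp only [zpow_natCast]

theorem form_mem (h : HD q α A B C) (j k i : ℤ) :
    (B ^ q) ^ j * (C ^ q) ^ k * (A ^ q) ^ i ∈ upperCentralSeries G 2 :=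
  mul_mem (mul_mem (zpow_mem h.Bq_mem _) (zpow_mem (center_le _ h.Cq_center) _))
    (zpow_mem h.Aq_mem _)

theorem two_comm_Aq (h : HD q α A B C) {x : G} (hx : x ∈ upperCentralSeries G 2) :
    Commute (A ^ q) x := by
  obtain ⟨j, k, i, rfl⟩ := h.two_form hx
  exact ((h.commABq.zpow_right j).mul_right ((h.comm_Cq _).symm.zpow_right k)).mul_right
    ((Commute.refl _).zpow_right i)

theorem two_comm_Bq (h : HD q α A B C) {x : G} (hx : x ∈ upperCentralSeries G 2) :
    Commute (B ^ q) x := by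
  obtain ⟨j, k, i, rfl⟩ := h.two_form hx
  exact (((Commute.refl _).zpow_right j).mul_right ((h.comm_Cq _).symm.zpow_right k)).mul_right
    (h.commABq.symm.zpow_right i)

theorem two_abel (h : HD q α A B C) {x y : G} (hx : x ∈ upperCentralSeries G 2)
    (hy : y ∈ upperCentralSeries G 2) : Commute x y := by
  obtain ⟨j, k, i, rfl⟩ := h.two_form hx
  exact (((h.two_comm_Bq hy).zpow_left j).mul_left ((h.comm_Cq _).zpow_left k)).mul_left
    ((h.two_comm_Aq hy).zpow_left i)

theorem two_exp (h : HD q α A B C) {x : G} (hx : x ∈ upperCentralSeries G 2) : x ^ q = 1 := by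
  obtain ⟨j, k, i, rfl⟩ := h.two_form hx
  have c1 := h.two_abel (mul_mem (zpow_mem h.Bq_mem j) (zpow_mem (center_le _ h.Cq_center) k))
    (zpow_mem h.Aq_mem i)
  have c2 := h.two_abel (zpow_mem h.Bq_mem j) (zpow_mem (center_le _ h.Cq_center) k)
  rw [c1.mul_pow, c2.mul_pow]
  have t : ∀ (g : G) (z : ℤ), g ^ (q * q) = 1 → ((g ^ q) ^ z) ^ q = 1 := by
    intro g z hg
    rw [← zpow_natCast, ← zpow_mul, mul_comm, zpow_mul, zpow_natCast, ← pow_mul, hg, one_zpow]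
  rw [t _ _ h.hBq, t _ _ h.hCq, t _ _ h.hAq]; simp

theorem mul_pow_q (h : HD q α A B C) {x : G} (hx : x ∈ upperCentralSeries G 2) (g : G) :
    (g * x) ^ q = g ^ q := by
  obtain ⟨z, hz, e⟩ := two_comm hx g
  have cz := Subgroup.mem_center_iff.1 hz
  have hxn : ∀ n : ℕ, x ^ n * g = g * x ^ n * z ^ n := by
    intro n
    induction n with
    | zero => simp
    | succ n ih =>
      have : Commute z (x ^ n) := (cz (x ^ n)).symm
      rw [pow_succ, mul_assoc, e, ← mul_assoc, ← mul_assoc, ih, pow_succ z]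
      have c3 : z ^ n * x = x * z ^ n := ((show Commute x z from cz x).pow_right n).symm.eq
      simp only [mul_assoc]
      rw [← mul_assoc (z ^ n) x, c3]
      simp only [mul_assoc]
  have key : ∀ n : ℕ, (g * x) ^ n = g ^ n * x ^ n * z ^ (n.choose 2) := by
    intro n
    induction n with
    | zero => simp
    | succ n ih =>
      rw [pow_succ, ih, Nat.choose_succ_succ' n 1, Nat.choose_one_right, pow_add z]
      have c3 : z ^ (n.choose 2) * (g * x) = (g * x) * z ^ (n.choose 2) :=
        ((show Commute (g * x) z from cz _).pow_right _).symm.eq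
      have c4 : z ^ n * x = x * z ^ n := ((show Commute x z from cz x).pow_right n).symm.eq
      calc g ^ n * x ^ n * z ^ n.choose 2 * (g * x)
          = g ^ n * (x ^ n * g) * x * z ^ n.choose 2 := by
            rw [mul_assoc, c3]; simp only [mul_assoc]
        _ = g ^ n * (g * x ^ n * z ^ n) * x * z ^ n.choose 2 := by rw [hxn]
        _ = g ^ n * g * x ^ n * (z ^ n * x) * z ^ n.choose 2 := by simp only [mul_assoc]
        _ = _ := by rw [c4, pow_succ g, pow_succ x]; simp only [mul_assoc]
  rw [key, h.two_exp hx]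
  obtain ⟨c, hc⟩ := dvd_choose_two_aux h.odd
  rw [hc, pow_mul, h.two_exp (center_le z hz)]
  simp

theorem new_comm (h : HD q α A B C) {x y : G} (hx : x ∈ upperCentralSeries G 2)
    (hy : y ∈ upperCentralSeries G 2) :
    ∃ z ∈ Subgroup.center G, (A * x)⁻¹ * (B * y)⁻¹ * (A * x) * (B * y) = C * z := by
  obtain ⟨z, hz, ez⟩ := two_comm hx B
  obtain ⟨w, hw, ew⟩ := two_comm hy A
  have cz := Subgroup.mem_center_iff.1 hz
  have cw := Subgroup.mem_center_iff.1 hw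
  refine ⟨w⁻¹ * z, mul_mem (inv_mem hw) hz, ?_⟩
  have e1 : (A * x) * (B * y) = A * B * (x * y) * z := by
    calc (A * x) * (B * y) = A * (x * B) * y := by group
      _ = A * (B * x * z) * y := by rw [ez]
      _ = A * B * x * (z * y) := by group
      _ = _ := by rw [← cz y]; group
  have e2 : (B * y) * (A * x) = B * A * (x * y) * w := by
    calc (B * y) * (A * x) = B * (y * A) * x := by group
      _ = B * (A * y * w) * x := by rw [ew]
      _ = B * A * y * (w * x) := by group
      _ = B * A * (y * x) * w := by rw [← cw x]; group
      _ = _ := by rw [(h.two_abel hy hx).eq]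
  have e3 : (A * x)⁻¹ * (B * y)⁻¹ * (A * x) * (B * y) =
      ((B * y) * (A * x))⁻¹ * ((A * x) * (B * y)) := by group
  have hc := (h.comm_C (mul_mem hx hy)).eq
  rw [e3, e2, e1]
  have e4 : (B * A)⁻¹ * (A * B) = C := by rw [h.hC]; group
  calc (B * A * (x * y) * w)⁻¹ * (A * B * (x * y) * z)
      = w⁻¹ * ((x * y)⁻¹ * (((B * A)⁻¹ * (A * B)) * (x * y))) * z := by group
    _ = w⁻¹ * C * z := by rw [e4, ← hc]; group
    _ = C * (w⁻¹ * z) := by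
      rw [← (Subgroup.mem_center_iff.1 (inv_mem hw)) C]; group

/-- The shifted pair satisfies the relations. -/
theorem shift (h : HD q α A B C) {x y : G} (hx : x ∈ upperCentralSeries G 2)
    (hy : y ∈ upperCentralSeries G 2) :
    ∃ C', HB q α (A * x) (B * y) C' ∧ C' ^ q = C ^ q := by
  obtain ⟨z, hz, e⟩ := h.new_comm hx hy
  have cz := Subgroup.mem_center_iff.1 hz
  obtain ⟨u, hu⟩ := h.dvd
  have hα : α = q * u + 1 := by linarith
  have pA : (A * x) ^ α = A ^ α * x := by
    rw [hα, zpow_add, zpow_add, zpow_mul, zpow_mul, zpow_natCast, zpow_natCast, h.mul_pow_q hx]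
    simp [mul_assoc]
  have pB : (B * y) ^ α = B ^ α * y := by
    rw [hα, zpow_add, zpow_add, zpow_mul, zpow_mul, zpow_natCast, zpow_natCast, h.mul_pow_q hy]
    simp [mul_assoc]
  refine ⟨C * z, ⟨e.symm, ?_, ?_, ?_, ?_, h.odd, h.dvd⟩, ?_⟩
  · rw [pA, ← h.hA]
    have hc := (h.comm_C hx).eq
    calc (C * z)⁻¹ * (A * x) * (C * z) = z⁻¹ * (C⁻¹ * A * (x * C)) * z := by group
      _ = z⁻¹ * ((C⁻¹ * A * C * x) * z) := by rw [hc]; group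
      _ = _ := by rw [cz]; group
  · rw [pB, ← h.hB]
    have hc := (h.comm_C hy).inv_right.eq
    calc (C * z) * (B * y) * (C * z)⁻¹ = C * (z * (B * y)) * z⁻¹ * C⁻¹ := by group
      _ = C * B * (y * C⁻¹) := by rw [← cz]; group
      _ = _ := by rw [hc]; group
  · rw [pow_mul, h.mul_pow_q hx, ← pow_mul, h.hAq]
  · rw [pow_mul, h.mul_pow_q hy, ← pow_mul, h.hBq]
  · exact h.mul_pow_q (center_le z hz) C

theorem card_two (h : HD q α A B C) : Nat.card (upperCentralSeries G 2) = q ^ 3 := by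
  let f : Fin q × Fin q × Fin q → upperCentralSeries G 2 := fun t =>
    ⟨(B ^ q) ^ (t.1 : ℤ) * (C ^ q) ^ (t.2.1 : ℤ) * (A ^ q) ^ (t.2.2 : ℤ), h.form_mem _ _ _⟩
  have hq : (0 : ℤ) < q := by exact_mod_cast h.qpos
  have hf : Function.Bijective f := by
    constructor
    · rintro ⟨j, k, i⟩ ⟨j', k', i'⟩ e
      have e := congrArg Subtype.val e
      simp only [f, ← zpow_natCast, ← zpow_mul] at e
      have u := h.uniq _ _ _ _ _ _ e
      have t : ∀ a b : Fin q, ((q * q : ℕ) : ℤ) ∣ (q : ℤ) * (a : ℕ) - q * (b : ℕ) → a = b := by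
        intro a b hab
        rw [← mul_sub] at hab
        push_cast at hab
        have := Int.dvd_of_mul_dvd_mul_left hq.ne' hab
        have h0 := Int.eq_zero_of_abs_lt_dvd this (by
          rw [abs_lt]; constructor <;> omega)
        ext; omega
      simp only [Prod.mk.injEq]
      exact ⟨t _ _ u.2.1, t _ _ u.2.2, t _ _ u.1⟩
    · rintro ⟨x, hx⟩
      obtain ⟨j, k, i, rfl⟩ := h.two_form hx
      have t : ∀ z : ℤ, ∃ a : Fin q, ∀ g : G, g ^ (q * q) = 1 → (g ^ q) ^ (a : ℤ) = (g ^ q) ^ z := by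
        intro z
        have h1 := Int.emod_nonneg z hq.ne'
        have h2 := Int.emod_lt_of_pos z hq
        refine ⟨⟨(z % q).toNat, by omega⟩, ?_⟩
        intro g hg
        apply zpow_eq_of_dvd_aux (n := q) (by rw [← pow_mul, hg])
        simp only [Int.toNat_of_nonneg h1]
        rw [← dvd_neg, neg_sub]
        exact Int.dvd_self_sub_emod
      obtain ⟨j', ej⟩ := t j
      obtain ⟨k', ek⟩ := t k
      obtain ⟨i', ei⟩ := t i
      refine ⟨(j', k', i'), ?_⟩
      apply Subtype.ext
      simp only [f]
      rw [ej _ h.hBq, ek _ h.hCq, ei _ h.hAq]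
  rw [← Nat.card_eq_of_bijective f hf]
  simp; ring

end HD

/-! ### The permutation model -/

section Model
variable {R : Type*} [CommRing R]

/-- Inverse of the generator `A` in the model. -/
def mA (c : R) (hc : c * c = 0) : Equiv.Perm (R × R) where
  toFun x := (x.1 + c * x.1 * (x.1 - 1), x.2 - x.1)
  invFun x := (x.1 - c * x.1 * (x.1 - 1), x.2 + (x.1 - c * x.1 * (x.1 - 1)))
  left_inv := by
    rintro ⟨j, k⟩
    ext
    · simp only
      linear_combination (-(j * (j - 1)) * (2 * j - 1 + c * j * (j - 1))) * hc
    · simp only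
      linear_combination (-(j * (j - 1)) * (2 * j - 1 + c * j * (j - 1))) * hc
  right_inv := by
    rintro ⟨j, k⟩
    ext
    · simp only
      linear_combination (-(j * (j - 1)) * (2 * j - 1 - c * j * (j - 1))) * hc
    · simp only
      ring

/-- The generator `B` in the model. -/
def mB : Equiv.Perm (R × R) where
  toFun x := (x.1 + 1, x.2)
  invFun x := (x.1 - 1, x.2)
  left_inv := by rintro ⟨j, k⟩; simp
  right_inv := by rintro ⟨j, k⟩; simp

/-- The commutator in the model. -/
def mC (c : R) (hc : c * c = 0) : Equiv.Perm (R × R) where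
  toFun x := ((1 - 2 * c) * x.1, x.2 + 1)
  invFun x := ((1 + 2 * c) * x.1, x.2 - 1)
  left_inv := by
    rintro ⟨j, k⟩
    ext
    · simp only
      linear_combination (-4 * j) * hc
    · simp
  right_inv := by
    rintro ⟨j, k⟩
    ext
    · simp only
      linear_combination (-4 * j) * hc
    · simp

theorem mA_pow (c : R) (hc : c * c = 0) (n : ℕ) (j k : R) :
    (mA c hc ^ n) (j, k) = (j + n * (c * j * (j - 1)),
      k - n * j - (n.choose 2 : ℕ) * (c * j * (j - 1))) := by
  induction n with
  | zero => simp
  | succ n ih =>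
    rw [pow_succ', Equiv.Perm.mul_apply, ih, Nat.choose_succ_succ' n 1, Nat.choose_one_right]
    ext
    · simp only [mA, Equiv.coe_fn_mk]
      push_cast
      linear_combination (n * (j * (j - 1)) * (2 * j - 1 + n * c * j * (j - 1))) * hc
    · simp only [mA, Equiv.coe_fn_mk]
      push_cast
      ring

theorem mA_pow_q (c : R) (hc : c * c = 0) (q : ℕ) (hq : (q : R) * c = 0) (ho : Odd q) (j k : R) :
    (mA c hc ^ q) (j, k) = (j, k - q * j) := by
  rw [mA_pow]
  obtain ⟨d, hd⟩ := dvd_choose_two_aux ho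
  rw [hd]
  ext
  · simp only
    linear_combination (j * (j - 1)) * hq
  · simp only
    push_cast
    linear_combination (- d * j * (j - 1)) * hq

theorem mA_zpow_q (c : R) (hc : c * c = 0) (q : ℕ) (hq : (q : R) * c = 0) (ho : Odd q) (n : ℤ)
    (j k : R) :
    ((mA c hc ^ q) ^ n) (j, k) = (j, k - q * n * j) := by
  induction n generalizing k with
  | zero => simp
  | succ n ih =>
    rw [zpow_add_one, Equiv.Perm.mul_apply, mA_pow_q c hc q hq ho, ih]
    ext
    · rfl
    · simp only; push_cast; ring
  | pred n ih =>
    rw [zpow_sub_one, Equiv.Perm.mul_apply]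
    have : (mA c hc ^ q)⁻¹ (j, k) = (j, k + q * j) := by
      rw [Equiv.Perm.inv_eq_iff_eq, mA_pow_q c hc q hq ho]
      simp
    rw [this, ih]
    ext
    · rfl
    · simp only; push_cast; ring

theorem mB_zpow (n : ℤ) (j k : R) : ((mB : Equiv.Perm (R × R)) ^ n) (j, k) = (j + n, k) := by
  induction n generalizing j with
  | zero => simp
  | succ n ih =>
    rw [zpow_add_one, Equiv.Perm.mul_apply]
    have : (mB : Equiv.Perm (R × R)) (j, k) = (j + 1, k) := rfl
    rw [this, ih]
    push_cast; ext <;> simp only; ring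
  | pred n ih =>
    rw [zpow_sub_one, Equiv.Perm.mul_apply]
    have : (mB : Equiv.Perm (R × R))⁻¹ (j, k) = (j - 1, k) := rfl
    rw [this, ih]
    push_cast; ext <;> simp only; ring

theorem mC_zpow (c : R) (hc : c * c = 0) (n : ℤ) (k : R) :
    (mC c hc ^ n) (0, k) = (0, k + n) := by
  induction n generalizing k with
  | zero => simp
  | succ n ih =>
    rw [zpow_add_one, Equiv.Perm.mul_apply]
    have : mC c hc (0, k) = (0, k + 1) := by simp [mC]
    rw [this, ih]
    push_cast; ext <;> simp only; ring
  | pred n ih =>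
    rw [zpow_sub_one, Equiv.Perm.mul_apply]
    have : (mC c hc)⁻¹ (0, k) = (0, k - 1) := by
      rw [Equiv.Perm.inv_eq_iff_eq]; simp [mC]
    rw [this, ih]
    push_cast; ext <;> simp only; ring

theorem mA_zpow0 (c : R) (hc : c * c = 0) (n : ℤ) (k : R) :
    ((mA c hc)⁻¹ ^ n) (0, k) = (0, k) := by
  induction n generalizing k with
  | zero => simp
  | succ n ih =>
    rw [zpow_add_one, Equiv.Perm.mul_apply]
    have : (mA c hc)⁻¹ (0, k) = (0, k) := by
      rw [Equiv.Perm.inv_eq_iff_eq]; simp [mA]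
    rw [this, ih]
  | pred n ih =>
    rw [zpow_sub_one, Equiv.Perm.mul_apply]
    have : (mA c hc)⁻¹⁻¹ (0, k) = (0, k) := by simp [mA]
    rw [this, ih]

theorem mA_zpow1 (c : R) (hc : c * c = 0) (n : ℤ) (k : R) :
    ((mA c hc)⁻¹ ^ n) (1, k) = (1, k + n) := by
  induction n generalizing k with
  | zero => simp
  | succ n ih =>
    rw [zpow_add_one, Equiv.Perm.mul_apply]
    have : (mA c hc)⁻¹ (1, k) = (1, k + 1) := by
      rw [Equiv.Perm.inv_eq_iff_eq]; simp [mA]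
    rw [this, ih]
    push_cast; ext <;> simp only; ring
  | pred n ih =>
    rw [zpow_sub_one, Equiv.Perm.mul_apply]
    have : (mA c hc)⁻¹⁻¹ (1, k) = (1, k - 1) := by simp [mA]
    rw [this, ih]
    push_cast; ext <;> simp only; ring

theorem model_HB (c : R) (hc : c * c = 0) (q : ℕ) (hqq : (q : R) * q = 0) (hq : (q : R) * c = 0)
    (ho : Odd q) (α : ℤ) (hα : (α : R) = 1 - 2 * c) (hd : (q : ℤ) ∣ α - 1) :
    HB q α (mA c hc)⁻¹ mB (mC c hc) where
  hC := by
    have : mC c hc * (mB⁻¹ * mA c hc) = mA c hc * mB⁻¹ := by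
      ext ⟨j, k⟩ : 1
      simp only [Equiv.Perm.mul_apply]
      have e : ∀ x : R × R, (mB : Equiv.Perm (R × R))⁻¹ x = (x.1 - 1, x.2) := fun x => rfl
      simp only [e, mA, mC, Equiv.coe_fn_mk]
      ext
      · simp only
        linear_combination (-2 * j * (j - 1)) * hc
      · simp only
        ring
    rw [eq_comm, inv_inv, ← this]; group
  hA := by
    obtain ⟨u, hu⟩ := hd
    have hα' : α = 1 + q * u := by linarith
    rw [inv_zpow, ← inv_inj, inv_inv]
    rw [show ((mC c hc)⁻¹ * (mA c hc)⁻¹ * mC c hc)⁻¹ = (mC c hc)⁻¹ * (mA c hc * mC c hc) by group]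
    rw [inv_mul_eq_iff_eq_mul]
    rw [hα', zpow_one_add, zpow_mul, zpow_natCast]
    have hcu : (1 : R) + q * u = 1 - 2 * c := by rw [← hα, hα']; push_cast; ring
    ext ⟨j, k⟩ : 1
    simp only [Equiv.Perm.mul_apply]
    rw [mA_zpow_q c hc q hq ho]
    simp only [mA, mC, Equiv.coe_fn_mk]
    ext
    · simp only
      linear_combination (j * (2 - 4 * j + 4 * c * j) + 2 * j * (j - 1)) * hc
    · simp only
      linear_combination j * hcu
  hB := by
    rw [mul_inv_eq_iff_eq_mul]
    ext ⟨j, k⟩ : 1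
    simp only [Equiv.Perm.mul_apply]
    simp only [mC, Equiv.coe_fn_mk]
    rw [mB_zpow, hα]
    simp only [mB, Equiv.coe_fn_mk]
    ext
    · simp only; ring
    · simp only
  hAq := by
    rw [inv_pow, inv_eq_one, pow_mul]
    ext ⟨j, k⟩ : 1
    have := mA_zpow_q c hc q hq ho q j k
    rw [zpow_natCast] at this
    rw [this]
    ext
    · simp
    · simp [hqq]
  hBq := by
    ext ⟨j, k⟩ : 1
    have := mB_zpow (R := R) (q * q : ℕ) j k
    rw [zpow_natCast] at this
    rw [this]
    ext
    · simp [hqq]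
    · simp
  odd := ho
  dvd := hd

theorem mC_zpow_snd (c : R) (hc : c * c = 0) (n : ℤ) (x : R × R) :
    ((mC c hc ^ n) x).2 = x.2 + n := by
  induction n generalizing x with
  | zero => simp
  | succ n ih =>
    rw [zpow_add_one, Equiv.Perm.mul_apply, ih]
    have : (mC c hc x).2 = x.2 + 1 := rfl
    rw [this]
    push_cast; ring
  | pred n ih =>
    rw [zpow_sub_one, Equiv.Perm.mul_apply, ih]
    have : ((mC c hc)⁻¹ x).2 = x.2 - 1 := rfl
    rw [this]
    push_cast; ring

end Model

theorem model_uniq {n : ℕ} (c : ZMod n) (hc : c * c = 0) (i j k i' j' k' : ℤ)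
    (h : (mB : Equiv.Perm (ZMod n × ZMod n)) ^ j * mC c hc ^ k * (mA c hc)⁻¹ ^ i =
      mB ^ j' * mC c hc ^ k' * (mA c hc)⁻¹ ^ i') :
    (n : ℤ) ∣ i - i' ∧ (n : ℤ) ∣ j - j' ∧ (n : ℤ) ∣ k - k' := by
  have h0 := congrArg (fun f => f (0, 0)) h
  simp only [Equiv.Perm.mul_apply, mA_zpow0, mC_zpow, mB_zpow, Prod.mk.injEq, zero_add] at h0
  have hj := (ZMod.intCast_eq_intCast_iff_dvd_sub _ _ _).1 h0.1.symm
  have hk := (ZMod.intCast_eq_intCast_iff_dvd_sub _ _ _).1 h0.2.symm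
  refine ⟨?_, hj, hk⟩
  have h1 := congrArg (fun f => (f (1, 0)).2) h
  simp only [Equiv.Perm.mul_apply, mA_zpow1, zero_add] at h1
  have e : ∀ (z : ℤ) (x : ZMod n × ZMod n), ((mB : Equiv.Perm (ZMod n × ZMod n)) ^ z) x =
    (x.1 + z, x.2) := fun z x => mB_zpow z x.1 x.2
  rw [e, e, mC_zpow_snd, mC_zpow_snd, h0.2, add_left_inj] at h1
  exact (ZMod.intCast_eq_intCast_iff_dvd_sub _ _ _).1 h1.symm

section Final
variable {p m : ℕ} {α : ℤ}

theorem pow_sq_aux (p m : ℕ) : p ^ (2 * m) = p ^ m * p ^ m := by rw [two_mul, pow_add]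

/-- The universal property of `HGroup`. -/
theorem lift_rels {G : Type*} [Group G] {A B C : G} (h : HB (p ^ m) α A B C) :
    ∀ r ∈ hRels p m α, FreeGroup.lift (![A, B] : Fin 2 → G) r = 1 := by
  intro r hr
  simp only [hRels, Set.mem_insert_iff, Set.mem_singleton_iff] at hr
  have hC := h.hC
  rcases hr with rfl | rfl | rfl | rfl
  · simp only [map_mul, map_inv, map_zpow, FreeGroup.lift_apply_of, Matrix.cons_val_zero,
      Matrix.cons_val_one]
    rw [← hC, h.hA, mul_inv_cancel]
  · simp only [map_mul, map_inv, map_zpow, FreeGroup.lift_apply_of, Matrix.cons_val_zero,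
      Matrix.cons_val_one]
    rw [← hC, h.hB, mul_inv_cancel]
  · simp only [map_pow, FreeGroup.lift_apply_of, Matrix.cons_val_zero]
    rw [pow_sq_aux, h.hAq]
  · simp only [map_pow, FreeGroup.lift_apply_of, Matrix.cons_val_one]
    rw [pow_sq_aux]
    exact h.hBq

/-- The homomorphism out of `HGroup`. -/
def hLift {G : Type*} [Group G] {A B C : G} (h : HB (p ^ m) α A B C) : HGroup p m α →* G :=
  PresentedGroup.toGroup (lift_rels h)

theorem hLift_zero {G : Type*} [Group G] {A B C : G} (h : HB (p ^ m) α A B C) :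
    hLift h (PresentedGroup.of 0) = A := PresentedGroup.toGroup.of _

theorem hLift_one {G : Type*} [Group G] {A B C : G} (h : HB (p ^ m) α A B C) :
    hLift h (PresentedGroup.of 1) = B := PresentedGroup.toGroup.of _

/-- The commutator in `HGroup`. -/
def hC (p m : ℕ) (α : ℤ) : HGroup p m α :=
  (PresentedGroup.of 0)⁻¹ * (PresentedGroup.of 1)⁻¹ * PresentedGroup.of 0 * PresentedGroup.of 1

theorem hLift_C {G : Type*} [Group G] {A B C : G} (h : HB (p ^ m) α A B C) :
    hLift h (hC p m α) = C := by
  refine Eq.trans ?_ h.hC.symm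
  simp only [hC, map_mul, map_inv, hLift_zero, hLift_one]

theorem HGroup_HB (hodd : Odd p) (hα : vCond p m α) :
    HB (p ^ m) α (PresentedGroup.of 0 : HGroup p m α) (PresentedGroup.of 1) (hC p m α) where
  hC := rfl
  hA := by
    have := PresentedGroup.one_of_mem (rels := hRels p m α) (Set.mem_insert _ _)
    rw [← mul_inv_eq_one]
    exact this
  hB := by
    have := PresentedGroup.one_of_mem (rels := hRels p m α)
      (Set.mem_insert_of_mem _ (Set.mem_insert _ _))
    rw [← mul_inv_eq_one]
    exact this
  hAq := by
    have := PresentedGroup.one_of_mem (rels := hRels p m α)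
      (Set.mem_insert_of_mem _ (Set.mem_insert_of_mem _ (Set.mem_insert _ _)))
    rw [← pow_sq_aux]
    exact this
  hBq := by
    have := PresentedGroup.one_of_mem (rels := hRels p m α)
      (Set.mem_insert_of_mem _ (Set.mem_insert_of_mem _ (Set.mem_insert_of_mem _ rfl)))
    rw [← pow_sq_aux]
    exact this
  odd := hodd.pow
  dvd := by have := hα.1; exact_mod_cast this

theorem HGroup_HD (hp : p.Prime) (hodd : Odd p) (hα : vCond p m α) :
    HD (p ^ m) α (PresentedGroup.of 0 : HGroup p m α) (PresentedGroup.of 1) (hC p m α) where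
  toHB := HGroup_HB hodd hα
  qpos := pow_pos hp.pos m
  hdiv := by
    intro n hn
    obtain ⟨⟨u, hu⟩, h2⟩ := hα
    have hpz : Prime (p : ℤ) := Nat.prime_iff_prime_int.1 hp
    have hq0 : (p : ℤ) ^ m ≠ 0 := pow_ne_zero _ hpz.ne_zero
    have hpu : ¬ (p : ℤ) ∣ u := by
      intro hd
      apply h2
      rw [hu, pow_succ]
      exact mul_dvd_mul_left _ hd
    rw [hu] at hn
    push_cast at hn
    rw [mul_assoc] at hn
    have h3 := Int.dvd_of_mul_dvd_mul_left hq0 hn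
    push_cast
    have hcop : IsCoprime ((p : ℤ) ^ m) u :=
      IsCoprime.pow_left ((Prime.coprime_iff_not_dvd hpz).2 hpu)
    exact hcop.dvd_of_dvd_mul_left h3
  gen := by
    rw [← PresentedGroup.closure_range_of]
    congr 1
    ext x
    simp only [Set.mem_insert_iff, Set.mem_singleton_iff, Set.mem_range, Fin.exists_fin_two]
    tauto
  uniq := by
    intro i j k i' j' k' e
    have ho : Odd (p ^ m) := hodd.pow
    obtain ⟨s, hs⟩ := ho.mul ho
    set q := p ^ m with hq
    have hqd : (q : ℤ) ∣ α - 1 := by have := hα.1; rw [hq]; exact_mod_cast this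
    have hqq : (q : ZMod (q * q)) * q = 0 := by
      have := ZMod.natCast_self (q * q)
      exact_mod_cast this
    have h2 : (2 : ZMod (q * q)) * (-s) = 1 := by
      have : ((2 * s + 1 : ℕ) : ZMod (q * q)) = 0 := by rw [← hs]; exact ZMod.natCast_self _
      push_cast at this
      linear_combination -this
    obtain ⟨u, hu⟩ := hqd
    let c : ZMod (q * q) := -(-s) * (q * u)
    have hαR : (α : ZMod (q * q)) = 1 + q * u := by
      have : α = 1 + q * u := by linarith
      rw [this]; push_cast; rfl
    have hc : c * c = 0 := by
      simp only [c]; linear_combination ((s : ZMod (q * q)) ^ 2 * u ^ 2) * hqq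
    have hqc : (q : ZMod (q * q)) * c = 0 := by
      simp only [c]; linear_combination ((s : ZMod (q * q)) * u) * hqq
    have hα2 : (α : ZMod (q * q)) = 1 - 2 * c := by
      rw [hαR]; simp only [c]; linear_combination (-(q : ZMod (q * q)) * u) * h2
    have M := model_HB c hc q hqq hqc ho α hα2 ⟨u, hu⟩
    have e2 := congrArg (hLift M) e
    have eC : hLift M (hC p m α) = mC c hc := hLift_C M
    simp only [map_mul, map_zpow, hLift_zero, hLift_one, eC] at e2
    exact model_uniq c hc _ _ _ _ _ _ e2

end Final

theorem HGroup_twoCentral_automorphisms (p m : ℕ) (hp : p.Prime) (hodd : Odd p) (hm : 1 ≤ m)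
    (α : ℤ) (hα : vCond p m α) (hα' : specialCond p m α) :
    ∃ Pi : (upperCentralSeries (HGroup p m α) 2) × (upperCentralSeries (HGroup p m α) 2) →*
        MulAut (HGroup p m α),
      Function.Injective Pi ∧
      Pi.range = autC (HGroup p m α) 2 ∧
      (∀ x y : upperCentralSeries (HGroup p m α) 2,
        Pi (x, y) (PresentedGroup.of 0) = (PresentedGroup.of 0 : HGroup p m α) * x ∧
        Pi (x, y) (PresentedGroup.of 1) = (PresentedGroup.of 1 : HGroup p m α) * y ∧
        ∀ z ∈ upperCentralSeries (HGroup p m α) 2, Pi (x, y) z = z) ∧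
      Nat.card (autC (HGroup p m α) 2) = p ^ (6 * m) := by
  have h := HGroup_HD (m := m) hp hodd hα
  set A : HGroup p m α := PresentedGroup.of 0 with hAdef
  set B : HGroup p m α := PresentedGroup.of 1 with hBdef
  set Z := upperCentralSeries (HGroup p m α) 2 with hZ
  have hom_ext : ∀ f g : HGroup p m α →* HGroup p m α, f A = g A → f B = g B → f = g := by
    intro f g h1 h2
    apply PresentedGroup.ext
    intro x
    fin_cases x
    · exact h1
    · exact h2
  have ex : ∀ t : Z × Z, ∃ f : HGroup p m α →* HGroup p m α,
      f A = A * t.1 ∧ f B = B * t.2 ∧ ∀ z ∈ Z, f z = z := by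
    rintro ⟨⟨x, hx⟩, ⟨y, hy⟩⟩
    obtain ⟨C', hB', hC'⟩ := h.shift hx hy
    have e0 : hLift hB' A = A * x := hLift_zero hB'
    have e1 : hLift hB' B = B * y := hLift_one hB'
    have e2 : hLift hB' (hC p m α) = C' := hLift_C hB'
    refine ⟨hLift hB', e0, e1, ?_⟩
    intro z hz
    obtain ⟨j, k, i, rfl⟩ := h.two_form hz
    simp only [map_mul, map_zpow, map_pow]
    rw [e0, e1, e2, hC', h.mul_pow_q hx, h.mul_pow_q hy]
  choose F FA FB FZ using ex
  have Fmul : ∀ s t : Z × Z, F (s * t) = (F s).comp (F t) := by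
    intro s t
    apply hom_ext
    · rw [FA, MonoidHom.comp_apply, FA, map_mul, FA, FZ _ _ t.1.2]
      simp [mul_assoc]
    · rw [FB, MonoidHom.comp_apply, FB, map_mul, FB, FZ _ _ t.2.2]
      simp [mul_assoc]
  have Fone : F 1 = MonoidHom.id _ := by
    apply hom_ext
    · rw [FA]; simp
    · rw [FB]; simp
  let Pi : Z × Z →* MulAut (HGroup p m α) :=
    { toFun := fun t => MonoidHom.toMulEquiv (F t) (F t⁻¹)
        (by rw [← Fmul, inv_mul_cancel, Fone]) (by rw [← Fmul, mul_inv_cancel, Fone])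
      map_one' := by
        ext x
        show F 1 x = x
        rw [Fone]; rfl
      map_mul' := by
        intro s t
        ext x
        show F (s * t) x = F s (F t x)
        rw [Fmul]; rfl }
  have PF : ∀ t x, Pi t x = F t x := fun t x => rfl
  have inj : Function.Injective Pi := by
    intro s t hst
    have ha : Pi s A = Pi t A := by rw [hst]
    have hb : Pi s B = Pi t B := by rw [hst]
    rw [PF, PF, FA, FA] at ha
    rw [PF, PF, FB, FB] at hb
    exact Prod.ext (Subtype.ext (mul_left_cancel ha)) (Subtype.ext (mul_left_cancel hb))
  have hN : Z.Normal := inferInstanceAs (Subgroup.upperCentralSeries _ 2).Normal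
  have ran : Pi.range = autC (HGroup p m α) 2 := by
    apply le_antisymm
    · rintro _ ⟨t, rfl⟩ g
      show F t g * g⁻¹ ∈ Z
      have : (QuotientGroup.mk' Z).comp (F t) = QuotientGroup.mk' Z := by
        apply PresentedGroup.ext
        intro x
        fin_cases x
        · show (QuotientGroup.mk' Z) (F t A) = QuotientGroup.mk' Z A
          rw [FA, map_mul]
          simp
        · show (QuotientGroup.mk' Z) (F t B) = QuotientGroup.mk' Z B
          rw [FB, map_mul]
          simp
      have e := DFunLike.congr_fun this g
      rw [MonoidHom.comp_apply] at e
      rw [← QuotientGroup.eq_one_iff, QuotientGroup.mk_mul, QuotientGroup.mk_inv, mul_inv_eq_one]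
      exact e
    · intro g hg
      have key : ∀ t, t⁻¹ * g t ∈ Z := by
        intro t
        have h1 : g t * t⁻¹ ∈ Z := hg t
        have := hN.conj_mem _ h1 t⁻¹
        simpa [mul_assoc] using this
      refine ⟨(⟨_, key A⟩, ⟨_, key B⟩), ?_⟩
      have : F (⟨_, key A⟩, ⟨_, key B⟩) = g.toMonoidHom := by
        apply hom_ext
        · rw [FA]; simp
        · rw [FB]; simp
      ext x
      rw [PF, this]; rfl
  refine ⟨Pi, inj, ran, ?_, ?_⟩
  · intro x y
    exact ⟨FA (x, y), FB (x, y), FZ (x, y)⟩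
  · rw [← ran, ← Nat.card_congr (MonoidHom.ofInjective inj).toEquiv, Nat.card_prod, hZ, h.card_two]
    ring
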